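/- Let q be an odd prime power (q = p^g, p odd prime), let h be odd, 0 < n < 3h with gcd(h,n) = 1, and assume either h + n ≡ 0 (mod 3) or q ≡ 1 (mod 3). Let u be a primitive element (a generator of the multiplicative group) of F_{q^{3h}} and set v = u^{q^h − 1}. Define on F_{q^{3h}} the multiplication x⋆y = y^{q^n}·x + y·x^{q^n} − v·(y^{q^{h+n}}·x^{q^{2h}} + y^{q^{2h}}·x^{q^{h+n}}). Then the middle-nucleus set {ψ ∈ End_{F_p}(F_{q^{3h}}) : for every y there exists z with ψ(x)⋆y = x⋆z for all x} equals the set of scalar maps {x ↦ λ·x : λ ∈ F_q}, and hence has exactly q elements. -/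

import Mathlib

/-- The multiplication of a Zha–Kyureghyan–Wang presemifield on `F_{q^{3h}}`
(realized as `GaloisField p (g * (3h))`, `q = p^g`):
`x⋆y = y^{q^n}·x + y·x^{q^n} − v·(y^{q^{h+n}}·x^{q^{2h}} + y^{q^{2h}}·x^{q^{h+n}})`. -/
noncomputable def zkwMul (p g h n q : ℕ) [Fact p.Prime]
    (v : GaloisField p (g * (3 * h))) (x y : GaloisField p (g * (3 * h))) :
    GaloisField p (g * (3 * h)) :=
  y ^ q ^ n * x + y * x ^ q ^ n -
    v * (y ^ q ^ (h + n) * x ^ q ^ (2 * h) + y ^ q ^ (2 * h) * x ^ q ^ (h + n))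

/-!
The automorphisms of a finite Galois extension `L/K` form an `L`-basis of `End_K L`, so every `ψ` is
`∑ τ, c τ • τ`. Write the multiplication as `∑ i, a i * α i x * β i y` with distinct `α i` and
distinct `β i`. If `ψ(x)⋆y = x⋆z` for all `x`, then comparing the coefficients of the automorphisms
in `x`, and afterwards in `y`, gives `c ρ = 0` as soon as some `α i * ρ` is not one of the `α j`.
Hence if `c ρ ≠ 0`, right translation by `ρ` preserves the set of the `α i`, and `orderOf ρ` divides
the number of the `α i`.

For `h ≠ 1` there are four of them, all in the group generated by `σ`, which has odd order `3h`. So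
`ρ = 1`, and `ψ` is multiplication by some `c`; the remaining relations `α i c = β i z` show that
`c` is fixed by `σ ^ h` and `σ ^ (2n)`, hence by `σ`. For `h = 1` some of the four coincide. If
`n ≡ 2` modulo `3`, two are left and the same argument applies. If `n ≡ 1`, the `α i` are all of
`{1, σ, σ²}` and nothing is excluded, but the coefficients `d` of `σ²` and `b` of `σ` satisfy
`σ d = -2 σ(v) d` and `σ² b = -2 σ(v) b`. Iterating three times, they vanish unless
`-8 v σ(v) σ²(v) = 1`; here `v σ(v) σ²(v) = 1` and `9 ≠ 0`, as `q ≡ 1` modulo `3`.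
-/

section Group

variable {G : Type*} [Group G]

theorem natCard_subgroup_dvd_natCard_of_mul_mem (H : Subgroup G) {S : Set G}
    (hS : ∀ s ∈ S, ∀ t ∈ H, s * t ∈ S) : Nat.card H ∣ Nat.card S := by
  have hpre : ((↑) : G → G ⧸ H) ⁻¹' ((↑) '' S) = S := by
    refine (Set.subset_preimage_image _ S).antisymm' fun t ⟨s, hs, hst⟩ => ?_
    simpa using hS s hs _ (QuotientGroup.eq.mp hst)
  rw [← hpre, Nat.card_congr (QuotientGroup.preimageMkEquivSubgroupProdSet H _), Nat.card_prod]
  exact dvd_mul_right _ _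

theorem orderOf_dvd_natCard_of_mul_mem {ρ : G} (hρ : IsOfFinOrder ρ) {S : Set G}
    (hS : ∀ s ∈ S, s * ρ ∈ S) : orderOf ρ ∣ Nat.card S := by
  rw [← Nat.card_zpowers]
  refine natCard_subgroup_dvd_natCard_of_mul_mem _ fun s hs t ht => ?_
  obtain ⟨k, rfl⟩ := hρ.mem_powers_iff_mem_zpowers.mpr ht
  change s * ρ ^ k ∈ S
  induction k with
  | zero => simpa using hs
  | succ k ih =>
    have := hS _ (ih (by simp))
    rwa [mul_assoc, ← pow_succ] at this

theorem injective_vec_of_notMem_zpowers {ω t : G} (hω : ω ^ 2 ≠ 1)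
    (ht : t ∉ Subgroup.zpowers ω) : Function.Injective ![1, ω ^ 2, ω * t, t] := by
  have hpow (k : ℤ) : t ≠ ω ^ k := fun h => ht ⟨k, h.symm⟩
  have h02 : 1 ≠ ω * t := fun h =>
    hpow (-1) (by rw [zpow_neg_one, eq_inv_of_mul_eq_one_right h.symm])
  have h03 : 1 ≠ t := fun h => hpow 0 (by rw [zpow_zero, h])
  have h12 : ω ^ 2 ≠ ω * t := fun h => hpow 1 (by simpa [pow_two] using h.symm)
  have h13 : ω ^ 2 ≠ t := fun h => hpow 2 (mod_cast h.symm)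
  have h23 : ω * t ≠ t := fun h => hω (by rw [mul_eq_right.mp h, one_pow])
  intro i j hij
  fin_cases i <;> fin_cases j <;> simp_all

theorem injective_vec_of_orderOf_eq_three {x : G} (hx : orderOf x = 3) :
    Function.Injective ![1, x, x ^ 2] := by
  have hvec : ![1, x, x ^ 2] = fun i : Fin 3 => x ^ (i : ℕ) := by
    ext i
    fin_cases i <;> simp
  rw [hvec]
  exact fun i j hij => Fin.ext (pow_injOn_Iio_orderOf (by simp [hx]) (by simp [hx]) hij)

theorem pow_notMem_zpowers_pow {x : G} {h n : ℕ} (hx : h ∣ orderOf x) (hh : h ≠ 1)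
    (hgcd : h.Coprime n) : x ^ n ∉ Subgroup.zpowers (x ^ h) := by
  rintro ⟨k, hk⟩
  have hdvd : (orderOf x : ℤ) ∣ h * k - n := by
    rw [orderOf_dvd_iff_zpow_eq_one, zpow_sub, zpow_mul, zpow_natCast, zpow_natCast]
    exact mul_inv_eq_one.mpr hk
  have hhn : h ∣ n := by
    rw [← Int.natCast_dvd_natCast, ← dvd_sub_right (dvd_mul_right (h : ℤ) k)]
    exact (Int.natCast_dvd_natCast.mpr hx).trans hdvd
  exact hh (hgcd.eq_one_of_dvd hhn)

end Group

section AlgEquiv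

variable {R A : Type*} [CommSemiring R] [CommSemiring A] [Algebra R A] {σ : A ≃ₐ[R] A}

theorem algEquiv_eq_one_of_apply_generator {u : A} (hu : ∀ x : A, x ≠ 0 → ∃ i : ℕ, x = u ^ i)
    (h : σ u = u) : σ = 1 := by
  ext x
  rcases eq_or_ne x 0 with rfl | hx
  · simp
  · obtain ⟨i, rfl⟩ := hu x hx
    simp [h]

theorem natCard_setOf_eq_mul (P : A → Prop) :
    Nat.card {ψ : A →ₗ[R] A | ∃ l, P l ∧ ∀ x, ψ x = l * x} = Nat.card {l // P l} := by
  have himage : {ψ : A →ₗ[R] A | ∃ l, P l ∧ ∀ x, ψ x = l * x} =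
      LinearMap.mulLeft R '' {l | P l} := by
    ext ψ
    simp [LinearMap.ext_iff, eq_comm]
  rw [himage, Nat.card_image_of_injective fun _ _ => LinearMap.mulLeft_inj.mp]
  rfl

theorem apply_eq_of_pow_apply_eq {i j : ℕ} {c : A} (hij : i.Coprime j) (hi : (σ ^ i) c = c)
    (hj : (σ ^ j) c = c) : σ c = c := by
  rw [AlgEquiv.coe_pow] at hi hj
  simpa [hij.gcd_eq_one] using! Function.IsPeriodicPt.gcd hi hj

theorem pow_apply_eq_prod_mul {c w : A} (hc : σ c = w * c) (m : ℕ) :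
    (σ ^ m) c = (∏ i ∈ Finset.range m, (σ ^ i) w) * c := by
  induction m with
  | zero => simp
  | succ m ih =>
    rw [pow_succ, AlgEquiv.mul_apply, hc, map_mul, ih, Finset.prod_range_succ]
    ring

variable [IsCancelMulZero A]

theorem eq_zero_of_apply_eq_mul {m : ℕ} (hσ : σ ^ m = 1) {c w : A} (hc : σ c = w * c)
    (hw : ∏ i ∈ Finset.range m, (σ ^ i) w ≠ 1) : c = 0 := by
  by_contra hc0
  refine hw (mul_right_cancel₀ hc0 ?_)
  rw [← pow_apply_eq_prod_mul hc, hσ, one_mul, AlgEquiv.one_apply]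

theorem mul_apply_mul_apply_apply_eq_one {u v : A} (hσ : σ ^ 3 = 1) (hu : u ≠ 0)
    (huv : σ u = v * u) : v * σ v * σ (σ v) = 1 := by
  have hprod := pow_apply_eq_prod_mul huv 3
  rw [hσ, AlgEquiv.one_apply, eq_comm, mul_eq_right₀ hu] at hprod
  simpa [Finset.prod_range_succ] using hprod

end AlgEquiv

section Basis

variable {K L : Type*} [Field K] [Field L] [Algebra K L]

theorem linearIndependent_algEquiv_toLinearMap :
    LinearIndependent L fun τ : Gal(L/K) => τ.toLinearMap :=
  (linearIndependent_toLinearMap K L L).comp (fun τ : Gal(L/K) => (τ : L →ₐ[K] L))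
    fun _ _ h => AlgEquiv.coe_toAlgHom_injective h

theorem eq_zero_of_forall_sum_mul_algEquiv_eq_zero {ι : Type*} [Fintype ι] {e : ι → Gal(L/K)}
    (he : Function.Injective e) {a : ι → L} (h : ∀ x, ∑ i, a i * e i x = 0) (i : ι) : a i = 0 := by
  refine Fintype.linearIndependent_iff.mp (linearIndependent_algEquiv_toLinearMap.comp e he) a
    (LinearMap.ext fun x => ?_) i
  simpa using! h x

variable [FiniteDimensional K L] [IsGalois K L]

variable (K L) in
/-- The automorphisms of a finite Galois extension `L/K`, as an `L`-basis of the `K`-linear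
endomorphisms of `L`. -/
noncomputable def algEquivBasis : Module.Basis Gal(L/K) L (L →ₗ[K] L) :=
  basisOfLinearIndependentOfCardEqFinrank linearIndependent_algEquiv_toLinearMap (by
    rw [Module.finrank_linearMap_self, ← Nat.card_eq_fintype_card, IsGalois.card_aut_eq_finrank])

theorem algEquivBasis_apply (τ : Gal(L/K)) : algEquivBasis K L τ = τ.toLinearMap := by
  simp [algEquivBasis]

theorem algEquivBasis_repr_toLinearMap (τ : Gal(L/K)) :
    (algEquivBasis K L).repr τ.toLinearMap = Finsupp.single τ 1 := by
  rw [← algEquivBasis_apply, Module.Basis.repr_self]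

theorem algEquivBasis_repr_toLinearMap_comp (ρ : Gal(L/K)) (ψ : L →ₗ[K] L) (τ : Gal(L/K)) :
    (algEquivBasis K L).repr (ρ.toLinearMap ∘ₗ ψ) τ = ρ ((algEquivBasis K L).repr ψ (ρ⁻¹ * τ)) := by
  have h : ρ.toLinearMap ∘ₗ ψ =
      ∑ τ, ρ ((algEquivBasis K L).repr ψ (ρ⁻¹ * τ)) • algEquivBasis K L τ := by
    rw [← Equiv.sum_comp (Equiv.mulLeft ρ)]
    conv_lhs => rw [← (algEquivBasis K L).sum_repr ψ]
    ext x
    simp [algEquivBasis_apply]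
  rw [h, Module.Basis.repr_sum_self]

theorem apply_eq_algEquivBasis_repr_one_mul {ψ : L →ₗ[K] L}
    (h : ∀ τ ≠ 1, (algEquivBasis K L).repr ψ τ = 0) (x : L) :
    ψ x = (algEquivBasis K L).repr ψ 1 * x := by
  conv_lhs => rw [← (algEquivBasis K L).sum_repr ψ]
  rw [Fintype.sum_eq_single 1 fun τ hτ => by rw [h τ hτ, zero_smul]]
  simp [algEquivBasis_apply]

end Basis

section Nucleus

/-- The set of linear maps `ψ` for which every `y` has a `z` with `ψ(x)⋆y = x⋆z` for all `x`: the
middle nucleus of a multiplication `⋆`, given here as a bare function `M`. -/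
def middleNucleus (R : Type*) {A : Type*} [Semiring R] [AddCommMonoid A] [Module R A]
    (M : A → A → A) : Set (A →ₗ[R] A) :=
  {ψ | ∀ y, ∃ z, ∀ x, M (ψ x) y = M x z}

variable {K L : Type*} [Field K] [Field L] [Algebra K L] {ι : Type*} [Fintype ι]

/-- The biadditive form `∑ i, a i * α i x * β i y` with coefficients `a` and automorphisms `α`, `β`,
the shape in which the coefficients of its middle nucleus can be compared. -/
def autForm (a : ι → L) (α β : ι → Gal(L/K)) (x y : L) : L :=
  ∑ i, a i * α i x * β i y

variable {a : ι → L} {α β : ι → Gal(L/K)} {ψ : L →ₗ[K] L}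

theorem exists_apply_eq_apply_of_mem_middleNucleus (hα : Function.Injective α)
    (ha : ∀ i, a i ≠ 0) {c : L} (hψ : ψ ∈ middleNucleus K (autForm a α β))
    (hc : ∀ x, ψ x = c * x) : ∃ z, ∀ i, α i c = β i z := by
  obtain ⟨z, hz⟩ := hψ 1
  refine ⟨z, fun i => sub_eq_zero.mp <| (mul_eq_zero.mp ?_).resolve_left (ha i)⟩
  refine eq_zero_of_forall_sum_mul_algEquiv_eq_zero hα (a := fun i => a i * (α i c - β i z))
    (fun x => ?_) i
  rw [← sub_eq_zero_of_eq (hz x), hc, autForm, autForm, ← Finset.sum_sub_distrib]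
  refine Finset.sum_congr rfl fun i _ => ?_
  rw [map_mul, map_one]
  ring

variable [FiniteDimensional K L] [IsGalois K L]

theorem sum_repr_eq_of_autForm_eq {y z : L}
    (h : ∀ x, autForm a α β (ψ x) y = autForm a α β x z) (τ : Gal(L/K)) :
    ∑ i, a i * β i y * α i ((algEquivBasis K L).repr ψ ((α i)⁻¹ * τ)) =
      ∑ i, a i * β i z * Finsupp.single (α i) 1 τ := by
  have hlin : ∑ i, (a i * β i y) • ((α i).toLinearMap ∘ₗ ψ) =
      ∑ i, (a i * β i z) • (α i).toLinearMap := by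
    ext x
    simpa [autForm, mul_right_comm] using h x
  simpa only [map_sum, map_smul, Finsupp.coe_finsetSum, Finset.sum_apply, Finsupp.smul_apply,
    smul_eq_mul, algEquivBasis_repr_toLinearMap, algEquivBasis_repr_toLinearMap_comp] using
      congr((algEquivBasis K L).repr $hlin τ)

theorem sum_repr_eq_of_injective (hα : Function.Injective α) {y z : L}
    (h : ∀ x, autForm a α β (ψ x) y = autForm a α β x z) (j : ι) :
    ∑ i, a i * β i y * α i ((algEquivBasis K L).repr ψ ((α i)⁻¹ * α j)) = a j * β j z := by
  classical
  simp [sum_repr_eq_of_autForm_eq h, Finsupp.single_apply, hα.eq_iff]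

theorem repr_eq_zero_of_mul_notMem_range (hβ : Function.Injective β)
    (hψ : ψ ∈ middleNucleus K (autForm a α β)) {i : ι} (ha : a i ≠ 0) {ρ : Gal(L/K)}
    (hρ : α i * ρ ∉ Set.range α) : (algEquivBasis K L).repr ψ ρ = 0 := by
  have hne (j : ι) : α i * ρ ≠ α j := fun hj => hρ ⟨j, hj.symm⟩
  have h := eq_zero_of_forall_sum_mul_algEquiv_eq_zero hβ
    (a := fun j => a j * α j ((algEquivBasis K L).repr ψ ((α j)⁻¹ * (α i * ρ)))) (fun y => by
      obtain ⟨z, hz⟩ := hψ y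
      simpa [mul_right_comm, Finsupp.single_eq_of_ne (hne _)] using
        sum_repr_eq_of_autForm_eq hz (α i * ρ)) i
  simpa [ha] using h

theorem exists_eq_mul_of_mem_middleNucleus [Nonempty ι] {σ : Gal(L/K)}
    (hα : Function.Injective α) (hβ : Function.Injective β) (ha : ∀ i, a i ≠ 0)
    (hσ : ∀ i, α i ∈ Subgroup.zpowers σ) (hcop : (Fintype.card ι).Coprime (orderOf σ))
    (hψ : ψ ∈ middleNucleus K (autForm a α β)) : ∃ c, ∀ x, ψ x = c * x := by
  refine ⟨_, apply_eq_algEquivBasis_repr_one_mul fun ρ hρ => ?_⟩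
  by_contra hne
  have hstab (i : ι) : α i * ρ ∈ Set.range α := by
    by_contra hi
    exact hne (repr_eq_zero_of_mul_notMem_range hβ hψ (ha i) hi)
  have hcard : orderOf ρ ∣ Fintype.card ι := by
    rw [← Nat.card_eq_fintype_card, ← Nat.card_range_of_injective hα]
    exact orderOf_dvd_natCard_of_mul_mem (isOfFinOrder_of_finite ρ)
      (Set.forall_mem_range.mpr hstab)
  have hmem : ρ ∈ Subgroup.zpowers σ := by
    obtain ⟨i⟩ := ‹Nonempty ι›
    obtain ⟨j, hj⟩ := hstab i
    exact (Subgroup.mul_mem_cancel_left _ (hσ i)).mp (hj ▸ hσ j)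
  exact hρ (orderOf_eq_one_iff.mp
    (Nat.eq_one_of_dvd_coprimes hcop hcard (orderOf_dvd_of_mem_zpowers hmem)))

end Nucleus

section ZKWForm

variable {K L : Type*} [Field K] [Field L] [Algebra K L] {σ : Gal(L/K)} {h n : ℕ} {v : L}

/-- The Zha–Kyureghyan–Wang multiplication with an automorphism `σ` in place of `x ↦ x ^ q`. -/
def zkwForm (σ : Gal(L/K)) (h n : ℕ) (v x y : L) : L :=
  (σ ^ n) y * x + y * (σ ^ n) x -
    v * ((σ ^ (h + n)) y * (σ ^ (2 * h)) x + (σ ^ (2 * h)) y * (σ ^ (h + n)) x)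

theorem zkwForm_eq_autForm (σ : Gal(L/K)) (h n : ℕ) (v : L) :
    zkwForm σ h n v = autForm ![1, -v, -v, 1] ![1, (σ ^ h) ^ 2, σ ^ h * σ ^ n, σ ^ n]
      (![1, (σ ^ h) ^ 2, σ ^ h * σ ^ n, σ ^ n] ∘ Fin.rev) := by
  ext x y
  simp only [zkwForm, autForm, Fin.sum_univ_four, ← pow_mul', ← pow_add, Matrix.cons_val,
    Function.comp_apply, Fin.reduceRev, AlgEquiv.one_apply]
  ring

theorem zkwForm_one_eq_of_mod_three_eq_one (hσ : orderOf σ = 3) (hn : n % 3 = 1) (v : L) :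
    zkwForm σ 1 n v = autForm ![1, 1, -2 * v] ![1, σ, σ ^ 2] ![σ, 1, σ ^ 2] := by
  have hσn : σ ^ n = σ := by rw [← pow_mod_orderOf, hσ, hn, pow_one]
  ext x y
  simp only [zkwForm, autForm, pow_add, hσn, Fin.sum_univ_three, Matrix.cons_val, pow_one,
    mul_one, ← pow_two, AlgEquiv.one_apply]
  ring

theorem zkwForm_one_eq_of_mod_three_eq_two (hσ : orderOf σ = 3) (hn : n % 3 = 2) (v : L) :
    zkwForm σ 1 n v = autForm ![1 - v, 1 - v] ![1, σ ^ 2] (![1, σ ^ 2] ∘ Fin.rev) := by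
  have hσn : σ ^ n = σ ^ 2 := by rw [← pow_mod_orderOf, hσ, hn]
  have hσ3 : σ * σ ^ 2 = 1 := by rw [← pow_succ', ← pow_orderOf_eq_one σ, hσ]
  ext x y
  simp only [zkwForm, autForm, pow_add, hσn, hσ3, Fin.sum_univ_two, Matrix.cons_val, pow_one,
    mul_one, Function.comp_apply, Fin.reduceRev, AlgEquiv.one_apply]
  ring

theorem mul_left_mem_middleNucleus_zkwForm {l : L} (hl : σ l = l) {ψ : L →ₗ[K] L}
    (hψ : ∀ x, ψ x = l * x) : ψ ∈ middleNucleus K (zkwForm σ h n v) := by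
  have hpow (k : ℕ) : (σ ^ k) l = l := by
    rw [AlgEquiv.coe_pow, Function.iterate_fixed hl]
  refine fun y => ⟨l * y, fun x => ?_⟩
  simp only [hψ, zkwForm, map_mul, hpow]
  ring

variable [FiniteDimensional K L] [IsGalois K L] {ψ : L →ₗ[K] L}

theorem exists_eq_mul_of_mem_middleNucleus_zkwForm (hσ : orderOf σ = 3 * h) (hh : Odd h)
    (h1 : h ≠ 1) (hgcd : h.Coprime n) (hv : v ≠ 0) (hψ : ψ ∈ middleNucleus K (zkwForm σ h n v)) :
    ∃ c, σ c = c ∧ ∀ x, ψ x = c * x := by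
  rw [zkwForm_eq_autForm] at hψ
  have hω : (σ ^ h) ^ 2 ≠ 1 := by
    rw [← pow_mul]
    exact pow_ne_one_of_lt_orderOf (by simpa using hh.pos.ne') (by have := hh.pos; omega)
  have hinj := injective_vec_of_notMem_zpowers hω
    (pow_notMem_zpowers_pow (hσ ▸ dvd_mul_left h 3) h1 hgcd)
  have ha : ∀ i, ![1, -v, -v, 1] i ≠ 0 := by simp [Fin.forall_fin_succ, hv]
  have hmem : ∀ i, ![1, (σ ^ h) ^ 2, σ ^ h * σ ^ n, σ ^ n] i ∈ Subgroup.zpowers σ := by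
    simp [Fin.forall_fin_succ, ← pow_mul, ← pow_add, Subgroup.npow_mem_zpowers]
  have hcop : (Fintype.card (Fin 4)).Coprime (orderOf σ) := by
    rw [hσ, Fintype.card_fin]
    exact ((by decide : Odd 3).mul hh).coprime_two_left.pow_left 2
  obtain ⟨c, hc⟩ := exists_eq_mul_of_mem_middleNucleus hinj (hinj.comp Fin.rev_injective) ha hmem
    hcop hψ
  obtain ⟨z, hz⟩ := exists_apply_eq_apply_of_mem_middleNucleus hinj ha hψ hc
  have hcz : c = (σ ^ n) z := hz 0
  have hzc : (σ ^ n) c = z := hz 3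
  have hfix_two_mul : (σ ^ (2 * n)) c = c := by
    rw [two_mul, pow_add, AlgEquiv.mul_apply, hzc, ← hcz]
  have hfix : (σ ^ h) c = c := by
    have h2 : ((σ ^ h) ^ 2) c = (σ ^ h) ((σ ^ n) z) := hz 1
    rw [← hcz, pow_two, AlgEquiv.mul_apply] at h2
    exact (σ ^ h).injective h2
  exact ⟨c, apply_eq_of_pow_apply_eq (hh.coprime_two_right.mul_right hgcd) hfix hfix_two_mul, hc⟩

theorem exists_eq_mul_of_mem_middleNucleus_zkwForm_of_mod_three_eq_two (hσ : orderOf σ = 3)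
    (hn : n % 3 = 2) (hv : v ≠ 1) (hψ : ψ ∈ middleNucleus K (zkwForm σ 1 n v)) :
    ∃ c, σ c = c ∧ ∀ x, ψ x = c * x := by
  rw [zkwForm_one_eq_of_mod_three_eq_two hσ hn] at hψ
  have hinj : Function.Injective ![1, σ ^ 2] := by
    simpa using (pow_ne_one_of_lt_orderOf (x := σ) two_ne_zero (by omega)).symm
  have ha : ∀ i, ![1 - v, 1 - v] i ≠ 0 := by simp [Fin.forall_fin_succ, sub_eq_zero, hv.symm]
  have hmem : ∀ i, ![1, σ ^ 2] i ∈ Subgroup.zpowers σ := by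
    simp [Fin.forall_fin_succ, Subgroup.npow_mem_zpowers]
  have hcop : (Fintype.card (Fin 2)).Coprime (orderOf σ) := by rw [hσ]; decide
  obtain ⟨c, hc⟩ := exists_eq_mul_of_mem_middleNucleus hinj (hinj.comp Fin.rev_injective) ha hmem
    hcop hψ
  obtain ⟨z, hz⟩ := exists_apply_eq_apply_of_mem_middleNucleus hinj ha hψ hc
  have hcz : c = (σ ^ 2) z := hz 0
  have hzc : (σ ^ 2) c = z := hz 1
  have hfix_four : (σ ^ 4) c = c := by
    rw [pow_add σ 2 2, AlgEquiv.mul_apply, hzc, ← hcz]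
  have hfix_three : (σ ^ 3) c = c := by rw [← hσ, pow_orderOf_eq_one, AlgEquiv.one_apply]
  exact ⟨c, apply_eq_of_pow_apply_eq (by decide) hfix_four hfix_three, hc⟩

theorem repr_relations_of_mem_middleNucleus_zkwForm (hσ : orderOf σ = 3) (hn : n % 3 = 1)
    (hψ : ψ ∈ middleNucleus K (zkwForm σ 1 n v)) :
    σ ((algEquivBasis K L).repr ψ (σ ^ 2)) = -2 * σ v * (algEquivBasis K L).repr ψ (σ ^ 2) ∧
    (σ ^ 2) ((algEquivBasis K L).repr ψ 1) = (algEquivBasis K L).repr ψ 1 ∧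
    (σ ^ 2) ((algEquivBasis K L).repr ψ σ) = -2 * σ v * (algEquivBasis K L).repr ψ σ := by
  have hinj := injective_vec_of_orderOf_eq_three hσ
  have hσ3 : σ ^ 3 = 1 := hσ ▸ pow_orderOf_eq_one σ
  have hσσσ (x : L) : σ (σ (σ x)) = x := AlgEquiv.congr_fun hσ3 x
  have hsq (x : L) : (σ ^ 2) x = σ (σ x) := rfl
  have hinv : σ⁻¹ = σ ^ 2 := inv_eq_of_mul_eq_one_left (by rw [← pow_succ, hσ3])
  have hinv' : (σ ^ 2)⁻¹ = σ := by rw [← hinv, inv_inv]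
  rw [zkwForm_one_eq_of_mod_three_eq_one hσ hn] at hψ
  set a := (algEquivBasis K L).repr ψ 1 with ha
  set b := (algEquivBasis K L).repr ψ σ with hb
  set d := (algEquivBasis K L).repr ψ (σ ^ 2) with hd
  -- The coefficients of `1` and `σ` in `x` are `σ z` and `z`: eliminating `z` leaves an identity
  -- in `y`.
  have key := eq_zero_of_forall_sum_mul_algEquiv_eq_zero hinj
    (a := ![σ d + 2 * σ v * d, a - σ (σ a), -(σ b + 2 * v * σ (σ b))]) fun y => by
      obtain ⟨z, hz⟩ := hψ y
      have h0 := sum_repr_eq_of_injective hinj hz 0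
      have h1 := congrArg σ (sum_repr_eq_of_injective hinj hz 1)
      simp only [Fin.sum_univ_three, Matrix.cons_val, hinv', inv_one, one_mul, mul_one,
        inv_mul_cancel, ← pow_two, AlgEquiv.one_apply, map_add, map_mul, map_neg, map_ofNat,
        ← ha, ← hb, ← hd, hsq, hσσσ] at h0 h1 ⊢
      rw [hinv, ← hd] at h0
      linear_combination h0 - h1
  have h2 := congrArg σ (neg_eq_zero.mp (key 2))
  simp only [map_add, map_mul, map_ofNat, map_zero, hσσσ] at h2
  exact ⟨(eq_neg_of_add_eq_zero_left (key 0)).trans (by ring), (sub_eq_zero.mp (key 1)).symm,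
    by linear_combination h2 + hsq b⟩

theorem exists_eq_mul_of_mem_middleNucleus_zkwForm_of_mod_three_eq_one (hσ : orderOf σ = 3)
    (hn : n % 3 = 1) (hv : 8 * (v * σ v * σ (σ v)) ≠ -1)
    (hψ : ψ ∈ middleNucleus K (zkwForm σ 1 n v)) :
    ∃ c, σ c = c ∧ ∀ x, ψ x = c * x := by
  obtain ⟨hd, ha, hb⟩ := repr_relations_of_mem_middleNucleus_zkwForm hσ hn hψ
  have hinj := injective_vec_of_orderOf_eq_three hσ
  have hσ3 : σ ^ 3 = 1 := hσ ▸ pow_orderOf_eq_one σ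
  have hσσσ (x : L) : σ (σ (σ x)) = x := AlgEquiv.congr_fun hσ3 x
  have hσ6 : (σ ^ 2) ^ 3 = 1 := by rw [pow_right_comm, hσ3, one_pow]
  have hsq (x : L) : (σ ^ 2) x = σ (σ x) := rfl
  have hd0 : (algEquivBasis K L).repr ψ (σ ^ 2) = 0 := by
    refine eq_zero_of_apply_eq_mul hσ3 hd fun hprod => hv ?_
    simp only [Finset.prod_range_succ, Finset.prod_range_zero, one_mul, pow_zero, pow_one,
      AlgEquiv.one_apply, hsq, map_mul, map_neg, map_ofNat, hσσσ] at hprod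
    linear_combination -hprod
  have hb0 : (algEquivBasis K L).repr ψ σ = 0 := by
    refine eq_zero_of_apply_eq_mul hσ6 hb fun hprod => hv ?_
    simp only [Finset.prod_range_succ, Finset.prod_range_zero, one_mul, pow_zero, pow_one,
      AlgEquiv.one_apply, pow_two (σ ^ 2), AlgEquiv.mul_apply, hsq, map_mul, map_neg, map_ofNat,
      hσσσ] at hprod
    linear_combination -hprod
  have hother (ρ) (hρ : ρ ∉ Set.range ![1, σ, σ ^ 2]) : (algEquivBasis K L).repr ψ ρ = 0 := by
    have hβ : ![σ, 1, σ ^ 2] = ![1, σ, σ ^ 2] ∘ Equiv.swap 0 1 := by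
      ext i
      fin_cases i <;> rfl
    rw [zkwForm_one_eq_of_mod_three_eq_one hσ hn, hβ] at hψ
    exact repr_eq_zero_of_mul_notMem_range (hinj.comp (Equiv.injective _)) hψ (i := 0) one_ne_zero
      (by rwa [Matrix.cons_val_zero, one_mul])
  refine ⟨_, apply_eq_of_pow_apply_eq (i := 2) (j := 3) (by decide) ha (hσσσ _),
    apply_eq_algEquivBasis_repr_one_mul fun ρ hρ => ?_⟩
  by_cases hmem : ρ ∈ Set.range ![1, σ, σ ^ 2]
  · obtain ⟨i, rfl⟩ := hmem
    fin_cases i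
    exacts [absurd rfl hρ, hb0, hd0]
  · exact hother ρ hmem

end ZKWForm

section MiddleNucleus

variable {K L : Type*} [Field K] [Field L] [Algebra K L]

theorem natCard_fixed_of_finrank_eq_mul_orderOf [FiniteDimensional K L] [IsGalois K L]
    (σ : Gal(L/K)) {g : ℕ} (hg : Module.finrank K L = g * orderOf σ) :
    Nat.card {l : L // σ l = l} = Nat.card K ^ g := by
  let F := IntermediateField.fixedField (Subgroup.zpowers σ)
  have hmem (l : L) : l ∈ F ↔ σ l = l := by
    rw [IntermediateField.mem_fixedField_iff]
    exact ⟨fun H => H σ (Subgroup.mem_zpowers σ), fun H τ hτ =>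
      (Subgroup.zpowers_le (H := MulAction.stabilizer Gal(L/K) l)).mpr H hτ⟩
  have hrank : Module.finrank K F = g := by
    have h1 := Module.finrank_mul_finrank K F L
    rw [IntermediateField.finrank_fixedField_eq_card, Nat.card_zpowers, hg] at h1
    exact Nat.eq_of_mul_eq_mul_right (orderOf_pos σ) h1
  rw [← hrank, ← Module.natCard_eq_pow_finrank (K := K) (V := F)]
  exact Nat.card_congr (Equiv.subtypeEquivRight fun l => (hmem l).symm)

theorem statement18_general [FiniteDimensional K L] [IsGalois K L] {σ : Gal(L/K)} {g h n : ℕ}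
    {v : L} (hL : Module.finrank K L = g * (3 * h)) (hσ : orderOf σ = 3 * h) (hh : Odd h)
    (hgcd : h.Coprime n) (hv : v ≠ 0)
    (h1 : h = 1 → n % 3 = 1 ∧ 8 * (v * σ v * σ (σ v)) ≠ -1 ∨ n % 3 = 2 ∧ v ≠ 1) :
    middleNucleus K (zkwForm σ h n v) = {ψ | ∃ l, σ l = l ∧ ∀ x, ψ x = l * x} ∧
      Nat.card (middleNucleus K (zkwForm σ h n v)) = Nat.card K ^ g := by
  have hset : middleNucleus K (zkwForm σ h n v) = {ψ | ∃ l, σ l = l ∧ ∀ x, ψ x = l * x} := by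
    refine Set.Subset.antisymm (fun ψ hψ => ?_)
      fun ψ ⟨l, hl, hmul⟩ => mul_left_mem_middleNucleus_zkwForm hl hmul
    rcases eq_or_ne h 1 with rfl | hne
    · rcases h1 rfl with ⟨hn, hnorm⟩ | ⟨hn, hv1⟩
      · exact exists_eq_mul_of_mem_middleNucleus_zkwForm_of_mod_three_eq_one hσ hn hnorm hψ
      · exact exists_eq_mul_of_mem_middleNucleus_zkwForm_of_mod_three_eq_two hσ hn hv1 hψ
    · exact exists_eq_mul_of_mem_middleNucleus_zkwForm hσ hh hne hgcd hv hψ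
  refine ⟨hset, ?_⟩
  rw [hset, natCard_setOf_eq_mul, natCard_fixed_of_finrank_eq_mul_orderOf σ (hσ ▸ hL)]

end MiddleNucleus

section GaloisField

/-- The automorphism `x ↦ x ^ (p ^ g)` of `GaloisField p N`. -/
noncomputable def frobeniusPow (p : ℕ) [Fact p.Prime] (g N : ℕ) :
    Gal(GaloisField p N/ZMod p) :=
  FiniteField.frobeniusAlgEquivOfAlgebraic (ZMod p) (GaloisField p N) ^ g

variable {p g n N : ℕ} [Fact p.Prime]

theorem frobeniusPow_pow_apply (g N k : ℕ) (x : GaloisField p N) :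
    (frobeniusPow p g N ^ k) x = x ^ (p ^ g) ^ k := by
  rw [frobeniusPow, ← pow_mul, AlgEquiv.coe_pow,
    FiniteField.coe_frobeniusAlgEquivOfAlgebraic_iterate, ZMod.card, pow_mul]

theorem frobeniusPow_apply (g N : ℕ) (x : GaloisField p N) :
    frobeniusPow p g N x = x ^ p ^ g := by
  simpa using frobeniusPow_pow_apply g N 1 x

theorem orderOf_frobeniusPow {m : ℕ} (hg : 0 < g) (hm : m ≠ 0) :
    orderOf (frobeniusPow p g (g * m)) = m := by
  rw [frobeniusPow, orderOf_pow, FiniteField.orderOf_frobeniusAlgEquivOfAlgebraic,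
    GaloisField.finrank p (mul_ne_zero hg.ne' hm), Nat.gcd_mul_right_left,
    Nat.mul_div_cancel_left _ hg]

theorem zkwMul_eq_zkwForm (g h n : ℕ) (v : GaloisField p (g * (3 * h))) :
    zkwMul p g h n (p ^ g) v = zkwForm (frobeniusPow p g (g * (3 * h))) h n v := by
  ext x y
  simp only [zkwMul, zkwForm, frobeniusPow_pow_apply]

theorem frobeniusPow_apply_eq_mul (u : GaloisField p N) :
    frobeniusPow p g N u = u ^ (p ^ g - 1) * u := by
  rw [frobeniusPow_apply, pow_sub_one_mul (pow_ne_zero g (Fact.out : p.Prime).ne_zero)]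

theorem nine_ne_zero_of_pow_mod_three_eq_one (F : Type*) [AddMonoidWithOne F] [CharP F p]
    (hp : p ^ g % 3 = 1) (hg : 0 < g) : (9 : F) ≠ 0 := fun h9 => by
  have hdvd : p ∣ 3 ^ 2 := (CharP.cast_eq_zero_iff F p _).mp (by simpa using h9)
  have hp3 : p = 3 := (Nat.prime_dvd_prime_iff_eq Fact.out Nat.prime_three).mp
    ((Fact.out : p.Prime).dvd_of_dvd_pow hdvd)
  rw [hp3, Nat.pow_mod, Nat.mod_self, zero_pow hg.ne'] at hp
  exact absurd hp (by decide)

theorem frobeniusPow_coeff_nondegenerate (hg : 0 < g) (hσ : orderOf (frobeniusPow p g N) = 3)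
    (hn0 : 0 < n) (hn3 : n < 3) (hcond : (1 + n) % 3 = 0 ∨ p ^ g % 3 = 1) {u v : GaloisField p N}
    (hu0 : u ≠ 0) (hu : ∀ x : GaloisField p N, x ≠ 0 → ∃ i : ℕ, x = u ^ i)
    (hv : v = u ^ (p ^ g - 1)) :
    n % 3 = 1 ∧ 8 * (v * frobeniusPow p g N v * frobeniusPow p g N (frobeniusPow p g N v)) ≠ -1 ∨
      n % 3 = 2 ∧ v ≠ 1 := by
  have huv : frobeniusPow p g N u = v * u := hv ▸ frobeniusPow_apply_eq_mul u
  obtain rfl | rfl : n = 1 ∨ n = 2 := by omega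
  · have h9 := nine_ne_zero_of_pow_mod_three_eq_one (GaloisField p N)
      (hcond.resolve_left (by decide)) hg
    refine .inl ⟨rfl, fun h8 => h9 ?_⟩
    rw [mul_apply_mul_apply_apply_eq_one (hσ ▸ pow_orderOf_eq_one _) hu0 huv] at h8
    linear_combination h8
  · refine .inr ⟨rfl, fun hv1 => ?_⟩
    have hσ1 := algEquiv_eq_one_of_apply_generator hu (by rw [huv, hv1, one_mul])
    rw [hσ1, orderOf_one] at hσ
    omega

end GaloisField

theorem statement18 (p g h n q : ℕ) [Fact p.Prime] (hp : Odd p) (hg : 0 < g)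
    (hq : q = p ^ g) (hh : Odd h) (hn0 : 0 < n) (hn3 : n < 3 * h)
    (hgcd : Nat.gcd h n = 1)
    (hcond : (h + n) % 3 = 0 ∨ q % 3 = 1)
    -- `u` is a primitive element of `F_{q^{3h}}` and `v = u^{q^h − 1}`
    (u v : GaloisField p (g * (3 * h))) (hu0 : u ≠ 0)
    (huprim : ∀ x : GaloisField p (g * (3 * h)), x ≠ 0 → ∃ i : ℕ, x = u ^ i)
    (hv : v = u ^ (q ^ h - 1)) :
    -- the middle-nucleus set is the set of scalar maps by elements of `F_q`
    {ψ : GaloisField p (g * (3 * h)) →ₗ[ZMod p] GaloisField p (g * (3 * h)) |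
        ∀ y, ∃ z, ∀ x, zkwMul p g h n q v (ψ x) y = zkwMul p g h n q v x z} =
      {ψ : GaloisField p (g * (3 * h)) →ₗ[ZMod p] GaloisField p (g * (3 * h)) |
        ∃ l : GaloisField p (g * (3 * h)), l ^ q = l ∧ ∀ x, ψ x = l * x} ∧
    -- hence it has exactly q elements
    Nat.card {ψ : GaloisField p (g * (3 * h)) →ₗ[ZMod p] GaloisField p (g * (3 * h)) |
        ∀ y, ∃ z, ∀ x, zkwMul p g h n q v (ψ x) y = zkwMul p g h n q v x z} = q := by
  subst hq
  have hm : 3 * h ≠ 0 := mul_ne_zero three_ne_zero hh.pos.ne'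
  have hσ := orderOf_frobeniusPow (p := p) hg hm
  have hv0 : v ≠ 0 := hv ▸ pow_ne_zero _ hu0
  have hnondeg (h1 : h = 1) := frobeniusPow_coeff_nondegenerate hg (by rw [hσ, h1]) hn0
    (by rwa [h1] at hn3) (by rwa [h1] at hcond) hu0 huprim
    (hv.trans (congrArg (u ^ ·) (by rw [h1, pow_one])))
  simpa only [middleNucleus, zkwMul_eq_zkwForm, frobeniusPow_apply, Nat.card_zmod] using
    statement18_general (GaloisField.finrank p (mul_ne_zero hg.ne' hm)) hσ hh hgcd hv0 hnondeg
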